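/- Let α ∈ (0,1), a ≠ 0, b ∈ ℝ, let φ : [0,1]² → ℝ be continuous, and for each ε > 0 let K_ε : [0,1]² → ℝ satisfy K_ε(t,s) = ε²[a²·ts + b(t²s + ts²)·ε + φ(t,s)·ε^{1+α} + R_ε(t,s)] with sup_{t,s∈[0,1]} |R_ε(t,s)|/ε^{1+α} → 0 as ε → 0⁺. Then for all sufficiently small ε > 0 one has K_ε(1,1) ≠ 0, and [K_ε(t,s) − K_ε(t,1)·K_ε(1,s)/K_ε(1,1)]/ε^{3+α} converges, uniformly for (t,s) ∈ [0,1]² as ε → 0⁺, to k̄_Y(t,s) = φ(t,s) + ts·φ(1,1) − t·φ(1,s) − s·φ(t,1). -/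

import Mathlib

open MeasureTheory Filter Topology Set

/-! Completing the square gives `a²ts + b(t²s + ts²)ε = g_ε(t) g_ε(s) - (b/a)² t²s² ε²` with
`g_ε(t) = at + (b/a)t²ε`, and `ε² = o(ε^(1+α))` because `α < 1`. So `K_ε / ε²` is the rank-one
kernel `g_ε ⊗ g_ε` up to `ε^(1+α) (φ + o(1))`. Pinning annihilates rank-one kernels, and to first
order it turns a perturbation `φ` of `g ⊗ h` into `(I - P) φ (I - Q)`, where `P` and `Q` replace a
function by its value at the pinning point times `g / g(x₀)` and `h / h(y₀)`. Here both of these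
weights tend to the identity. -/

open Asymptotics

section UniformConvergence

variable {ι X : Type*} {l : Filter ι} {S : Set X}

theorem tendstoUniformlyOn_self {β : Type*} [UniformSpace β] (f : X → β) :
    TendstoUniformlyOn (fun _ : ι => f) f l S :=
  fun _ hu => .of_forall fun _ _ _ => refl_mem_uniformity hu

theorem tendstoUniformlyOn_iff_isLittleO_one {E : Type*} [SeminormedAddCommGroup E]
    {F : ι → X → E} {f : X → E} :
    TendstoUniformlyOn F f l S ↔
      (fun q : ι × X => F q.1 q.2 - f q.2) =o[l ×ˢ 𝓟 S] fun _ => (1 : ℝ) := by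
  rw [isLittleO_one_iff, tendstoUniformlyOn_iff_tendsto, uniformity_eq_comap_nhds_zero,
    tendsto_comap_iff]
  rfl

variable {R : Type*} [SeminormedRing R]

theorem tendstoUniformlyOn_mul_of_isBigO_one {F G : ι → X → R} {f g : X → R}
    (hF : TendstoUniformlyOn F f l S) (hG : TendstoUniformlyOn G g l S)
    (hf : f =O[𝓟 S] fun _ => (1 : ℝ)) (hg : g =O[𝓟 S] fun _ => (1 : ℝ)) :
    TendstoUniformlyOn (fun i x => F i x * G i x) (fun x => f x * g x) l S := by
  rw [tendstoUniformlyOn_iff_isLittleO_one] at hF hG ⊢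
  have hf' := hf.comp_tendsto (tendsto_snd (f := l))
  have hg' := hg.comp_tendsto (tendsto_snd (f := l))
  have hG' := (hG.isBigO.add hg').congr_left fun q => sub_add_cancel (G q.1 q.2) (g q.2)
  have h := (hF.mul_isBigO hG').add (hf'.mul_isLittleO hG)
  simp only [Function.comp_apply, mul_one] at h
  exact h.congr_left fun q => by noncomm_ring

theorem tendstoUniformlyOn_mul_of_tendsto {F : ι → X → R} {f : X → R} {c : ι → R} {c₀ : R}
    (hc : Tendsto c l (𝓝 c₀)) (hF : TendstoUniformlyOn F f l S)
    (hf : f =O[𝓟 S] fun _ => (1 : ℝ)) :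
    TendstoUniformlyOn (fun i x => c i * F i x) (fun x => c₀ * f x) l S :=
  tendstoUniformlyOn_mul_of_isBigO_one (hc.tendstoUniformlyOn_const S) hF
    (isBigO_const_const c₀ one_ne_zero _) hf

theorem tendstoUniformlyOn_add_mul_of_tendsto_zero {F G : ι → X → R} {f g : X → R} {c : ι → R}
    (hF : TendstoUniformlyOn F f l S) (hc : Tendsto c l (𝓝 0))
    (hG : TendstoUniformlyOn G g l S) (hg : g =O[𝓟 S] fun _ => (1 : ℝ)) :
    TendstoUniformlyOn (fun i x => F i x + c i * G i x) f l S :=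
  (hF.add (tendstoUniformlyOn_mul_of_tendsto hc hG hg)).congr_right fun x _ => by simp

theorem tendstoUniformlyOn_prod_mul_of_isBigO_one {Y : Type*} {T : Set Y}
    {F : ι → X → R} {G : ι → Y → R} {f : X → R} {g : Y → R}
    (hF : TendstoUniformlyOn F f l S) (hG : TendstoUniformlyOn G g l T)
    (hf : f =O[𝓟 S] fun _ => (1 : ℝ)) (hg : g =O[𝓟 T] fun _ => (1 : ℝ)) :
    TendstoUniformlyOn (fun i (p : X × Y) => F i p.1 * G i p.2) (fun p => f p.1 * g p.2) l
      (S ×ˢ T) :=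
  tendstoUniformlyOn_mul_of_isBigO_one ((hF.comp Prod.fst).mono fun _ hp => hp.1)
    ((hG.comp Prod.snd).mono fun _ hp => hp.2)
    (hf.comp_tendsto (tendsto_principal_principal.2 fun _ hp => hp.1))
    (hg.comp_tendsto (tendsto_principal_principal.2 fun _ hp => hp.2))

end UniformConvergence

section Pinning

variable {X Y 𝕜 : Type*}

/-- The kernel `k` pinned at `(x₀, y₀)`, i.e. the Schur complement of its entry there. When `k` is
the covariance of a process and `x₀ = y₀`, this is the covariance of the bridge pinned at `x₀`.
If `k x₀ y₀ = 0`, division by zero makes it `k` itself. -/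
def pinnedKernel [Field 𝕜] (k : X → Y → 𝕜) (x₀ : X) (y₀ : Y) (x : X) (y : Y) : 𝕜 :=
  k x y - k x y₀ * k x₀ y / k x₀ y₀

/-- The remainder of `k` after subtraction of the rank-one kernel `g ⊗ h`, in units of `u`. -/
def rankOneRemainder [Field 𝕜] (k : X → Y → 𝕜) (g : X → 𝕜) (h : Y → 𝕜) (u : 𝕜)
    (x : X) (y : Y) : 𝕜 :=
  (k x y - g x * h y) / u

theorem pinnedKernel_div [Field 𝕜] (k : X → Y → 𝕜) (c : 𝕜) (x₀ : X) (y₀ : Y) (x : X) (y : Y) :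
    pinnedKernel (fun x y => k x y / c) x₀ y₀ x y = pinnedKernel k x₀ y₀ x y / c := by
  rcases eq_or_ne c 0 with rfl | hc
  · simp [pinnedKernel]
  · simp only [pinnedKernel]
    field_simp

theorem pinnedKernel_div_eq_rankOneRemainder [Field 𝕜] {k : X → Y → 𝕜} (g : X → 𝕜) (h : Y → 𝕜)
    (u : 𝕜) {x₀ : X} {y₀ : Y} (hk : k x₀ y₀ ≠ 0) (x : X) (y : Y) :
    pinnedKernel k x₀ y₀ x y / u =
      rankOneRemainder k g h u x y - (k x₀ y₀)⁻¹ * k x y₀ * rankOneRemainder k g h u x₀ y -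
        ((k x₀ y₀)⁻¹ * g x₀ * rankOneRemainder k g h u x y₀ -
          (k x₀ y₀)⁻¹ * rankOneRemainder k g h u x₀ y₀ * g x) * h y := by
  simp only [pinnedKernel, rankOneRemainder]
  field_simp
  ring

variable [NormedField 𝕜] {ι : Type*} {l : Filter ι} {S : Set X} {T : Set Y}
  {k : ι → X → Y → 𝕜} {g : ι → X → 𝕜} {h : ι → Y → 𝕜} {u : ι → 𝕜}
  {φ : X → Y → 𝕜} {g₀ : X → 𝕜} {h₀ : Y → 𝕜} {x₀ : X} {y₀ : Y}

theorem tendstoUniformlyOn_slice_of_rankOneRemainder {η : 𝕜} {ψ : X → 𝕜}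
    (hu : Tendsto u l (𝓝[≠] 0)) (hg : TendstoUniformlyOn g g₀ l S)
    (hh : Tendsto (h · y₀) l (𝓝 η))
    (hr : TendstoUniformlyOn (fun i x => rankOneRemainder (k i) (g i) (h i) (u i) x y₀) ψ l S)
    (hg₀ : g₀ =O[𝓟 S] fun _ => (1 : ℝ)) (hψ : ψ =O[𝓟 S] fun _ => (1 : ℝ)) :
    TendstoUniformlyOn (fun i x => k i x y₀) (fun x => η * g₀ x) l S := by
  obtain ⟨hu_zero, hu_ne⟩ := tendsto_nhdsWithin_iff.1 hu
  refine (tendstoUniformlyOn_add_mul_of_tendsto_zero (tendstoUniformlyOn_mul_of_tendsto hh hg hg₀)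
    hu_zero hr hψ).congr ?_
  filter_upwards [hu_ne] with i hi x _
  simp only [rankOneRemainder, mul_div_cancel₀ _ hi, mul_comm (h i y₀), add_sub_cancel]

theorem eventually_ne_zero_and_tendstoUniformlyOn_pinnedKernel_div (hu : Tendsto u l (𝓝[≠] 0))
    (hg : TendstoUniformlyOn g g₀ l S) (hh : TendstoUniformlyOn h h₀ l T)
    (hr : TendstoUniformlyOn
      (fun i (p : X × Y) => rankOneRemainder (k i) (g i) (h i) (u i) p.1 p.2)
      (fun p => φ p.1 p.2) l (S ×ˢ T))
    (hg₀ : g₀ =O[𝓟 S] fun _ => (1 : ℝ)) (hh₀ : h₀ =O[𝓟 T] fun _ => (1 : ℝ))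
    (hφ₁ : (φ · y₀) =O[𝓟 S] fun _ => (1 : ℝ)) (hφ₂ : φ x₀ =O[𝓟 T] fun _ => (1 : ℝ))
    (hx₀ : x₀ ∈ S) (hy₀ : y₀ ∈ T) (hgx₀ : g₀ x₀ ≠ 0) (hhy₀ : h₀ y₀ ≠ 0) :
    (∀ᶠ i in l, k i x₀ y₀ ≠ 0) ∧
    TendstoUniformlyOn (fun i (p : X × Y) => pinnedKernel (k i) x₀ y₀ p.1 p.2 / u i)
      (fun p => φ p.1 p.2 + g₀ p.1 / g₀ x₀ * (h₀ p.2 / h₀ y₀) * φ x₀ y₀ -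
        g₀ p.1 / g₀ x₀ * φ x₀ p.2 - h₀ p.2 / h₀ y₀ * φ p.1 y₀) l (S ×ˢ T) := by
  have hr_fst : TendstoUniformlyOn
      (fun i x => rankOneRemainder (k i) (g i) (h i) (u i) x y₀) (φ · y₀) l S :=
    (hr.comp fun x => (x, y₀)).mono fun x hx => ⟨hx, hy₀⟩
  have hr_snd : TendstoUniformlyOn
      (fun i y => rankOneRemainder (k i) (g i) (h i) (u i) x₀ y) (φ x₀) l T :=
    (hr.comp fun y => (x₀, y)).mono fun y hy => ⟨hx₀, hy⟩
  have hk := tendstoUniformlyOn_slice_of_rankOneRemainder hu hg (hh.tendsto_at hy₀) hr_fst hg₀ hφ₁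
  have hpivot : h₀ y₀ * g₀ x₀ ≠ 0 := mul_ne_zero hhy₀ hgx₀
  have hk_ne : ∀ᶠ i in l, k i x₀ y₀ ≠ 0 := (hk.tendsto_at hx₀).eventually_ne hpivot
  have hk_inv : Tendsto (fun i => (k i x₀ y₀)⁻¹) l (𝓝 (h₀ y₀ * g₀ x₀)⁻¹) :=
    (hk.tendsto_at hx₀).inv₀ hpivot
  have hweight := tendstoUniformlyOn_mul_of_tendsto hk_inv hk (hg₀.const_mul_left _)
  have hcorrection :=
    (tendstoUniformlyOn_mul_of_tendsto (hk_inv.mul (hg.tendsto_at hx₀)) hr_fst hφ₁).sub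
      (tendstoUniformlyOn_mul_of_tendsto (hk_inv.mul (hr_fst.tendsto_at hx₀)) hg hg₀)
  have hlim := (hr.sub (tendstoUniformlyOn_prod_mul_of_isBigO_one hweight hr_snd
      ((hg₀.const_mul_left _).const_mul_left _) hφ₂)).sub
    (tendstoUniformlyOn_prod_mul_of_isBigO_one hcorrection hh
      ((hφ₁.const_mul_left _).sub (hg₀.const_mul_left _)) hh₀)
  refine ⟨hk_ne, (hlim.congr ?_).congr_right fun p _ => ?_⟩
  · filter_upwards [hk_ne] with i hi p _
    exact (pinnedKernel_div_eq_rankOneRemainder (g i) (h i) (u i) hi p.1 p.2).symm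
  · simp only [Pi.sub_apply]
    field_simp
    ring

end Pinning

section SecondOrder

/-- The factor `g_ε` of the rank-one kernel `g_ε ⊗ g_ε` that agrees with
`a² t s + b (t² s + t s²) ε` up to `O(ε²)`. -/
noncomputable def leadingFactor (a b ε t : ℝ) : ℝ :=
  a * t + ε * (b / a * t ^ 2)

theorem leadingFactor_mul_leadingFactor {a : ℝ} (ha : a ≠ 0) (b ε t s : ℝ) :
    leadingFactor a b ε t * leadingFactor a b ε s =
      a ^ 2 * (t * s) + b * (t ^ 2 * s + t * s ^ 2) * ε + (b / a * (t * s)) ^ 2 * ε ^ 2 := by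
  simp only [leadingFactor]
  field_simp
  ring

theorem tendstoUniformlyOn_leadingFactor (a b : ℝ) :
    TendstoUniformlyOn (leadingFactor a b) (a * ·) (𝓝[>] 0) (Icc 0 1) := by
  have hbounded : (fun t : ℝ => b / a * t ^ 2) =O[𝓟 (Icc 0 1)] fun _ => (1 : ℝ) :=
    (by fun_prop : Continuous fun t : ℝ => b / a * t ^ 2).continuousOn.isBigO_principal
      isCompact_Icc (by simp)
  exact tendstoUniformlyOn_add_mul_of_tendsto_zero (tendstoUniformlyOn_self _)
    (tendsto_id.mono_left nhdsWithin_le_nhds) (tendstoUniformlyOn_self _) hbounded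

theorem tendsto_rpow_nhdsGT_zero {c : ℝ} (hc : 0 < c) :
    Tendsto (fun ε : ℝ => ε ^ c) (𝓝[>] 0) (𝓝[>] 0) := by
  refine tendsto_nhdsWithin_iff.2 ⟨?_, ?_⟩
  · have h := (Real.continuous_rpow_const hc.le).tendsto 0
    rw [Real.zero_rpow hc.ne'] at h
    exact h.mono_left nhdsWithin_le_nhds
  · filter_upwards [self_mem_nhdsWithin] with ε hε using Real.rpow_pos_of_pos hε c

theorem rankOneRemainder_leadingFactor {α a b ε : ℝ} (ha : a ≠ 0) (hε : 0 < ε)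
    (k : ℝ → ℝ → ℝ) (φ : ℝ → ℝ → ℝ) (t s : ℝ) :
    rankOneRemainder k (leadingFactor a b ε) (leadingFactor a b ε) (ε ^ (1 + α)) t s =
      φ t s +
        (k t s - a ^ 2 * (t * s) - b * (t ^ 2 * s + t * s ^ 2) * ε - φ t s * ε ^ (1 + α)) /
          ε ^ (1 + α) +
        ε ^ (1 - α) * -(b / a * (t * s)) ^ 2 := by
  have hu : ε ^ (1 + α) ≠ 0 := (Real.rpow_pos_of_pos hε _).ne'
  have hε_sq : ε ^ 2 = ε ^ (1 + α) * ε ^ (1 - α) := by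
    rw [← Real.rpow_add hε, ← Real.rpow_natCast]
    norm_num
  rw [rankOneRemainder, leadingFactor_mul_leadingFactor ha, hε_sq]
  field_simp
  ring

theorem tendstoUniformlyOn_rankOneRemainder_leadingFactor {α a b : ℝ} (hα : α < 1) (ha : a ≠ 0)
    {φ : ℝ → ℝ → ℝ} {k : ℝ → ℝ → ℝ → ℝ}
    (hk : TendstoUniformlyOn
      (fun ε (p : ℝ × ℝ) =>
        (k ε p.1 p.2 - a ^ 2 * (p.1 * p.2) - b * (p.1 ^ 2 * p.2 + p.1 * p.2 ^ 2) * ε -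
          φ p.1 p.2 * ε ^ (1 + α)) / ε ^ (1 + α))
      (fun _ => 0) (𝓝[>] 0) (Icc 0 1 ×ˢ Icc 0 1)) :
    TendstoUniformlyOn
      (fun ε (p : ℝ × ℝ) => rankOneRemainder (k ε) (leadingFactor a b ε) (leadingFactor a b ε)
        (ε ^ (1 + α)) p.1 p.2)
      (fun p => φ p.1 p.2) (𝓝[>] 0) (Icc 0 1 ×ˢ Icc 0 1) := by
  let square (p : ℝ × ℝ) : ℝ := -(b / a * (p.1 * p.2)) ^ 2
  have hsquare : square =O[𝓟 (Icc 0 1 ×ˢ Icc 0 1)] fun _ => (1 : ℝ) :=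
    (by fun_prop : Continuous square).continuousOn.isBigO_principal
      (isCompact_Icc.prod isCompact_Icc) (by simp)
  have hlim := tendstoUniformlyOn_add_mul_of_tendsto_zero
    ((tendstoUniformlyOn_self fun p : ℝ × ℝ => φ p.1 p.2).add hk)
    ((tendsto_rpow_nhdsGT_zero (sub_pos.2 hα)).mono_right nhdsWithin_le_nhds)
    (tendstoUniformlyOn_self square) hsquare
  refine (hlim.congr ?_).congr_right fun p _ => add_zero _
  filter_upwards [self_mem_nhdsWithin] with ε hε p _
  exact (rankOneRemainder_leadingFactor ha hε (k ε) φ p.1 p.2).symm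

end SecondOrder

theorem bridge_covariance_refined_limit_secondOrder_general
    (α a b : ℝ) (hα : α ∈ Ioo (-1 : ℝ) 1) (ha : a ≠ 0)
    (φ : ℝ → ℝ → ℝ)
    (hφ₁ : (φ · 1) =O[𝓟 (Icc 0 1)] fun _ => (1 : ℝ))
    (hφ₂ : φ 1 =O[𝓟 (Icc 0 1)] fun _ => (1 : ℝ))
    (K : ℝ → ℝ → ℝ → ℝ)
    (hK : TendstoUniformlyOn
      (fun ε (p : ℝ × ℝ) =>
        (K ε p.1 p.2 / ε ^ 2 - a ^ 2 * (p.1 * p.2) -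
          b * (p.1 ^ 2 * p.2 + p.1 * p.2 ^ 2) * ε -
          φ p.1 p.2 * ε ^ (1 + α)) / ε ^ (1 + α))
      (fun _ => 0) (𝓝[>] (0 : ℝ)) (Icc 0 1 ×ˢ Icc 0 1)) :
    (∀ᶠ ε in 𝓝[>] (0 : ℝ), K ε 1 1 ≠ 0) ∧
    TendstoUniformlyOn
      (fun ε (p : ℝ × ℝ) =>
        (K ε p.1 p.2 - K ε p.1 1 * K ε 1 p.2 / K ε 1 1) / ε ^ (3 + α))
      (fun p => φ p.1 p.2 + p.1 * p.2 * φ 1 1 - p.1 * φ 1 p.2 - p.2 * φ p.1 1)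
      (𝓝[>] (0 : ℝ)) (Icc 0 1 ×ˢ Icc 0 1) := by
  have hg₀ : (a * ·) =O[𝓟 (Icc 0 1)] fun _ => (1 : ℝ) :=
    (continuous_const_mul a).continuousOn.isBigO_principal isCompact_Icc (by simp)
  have one_mem : (1 : ℝ) ∈ Icc (0 : ℝ) 1 := by simp
  obtain ⟨hne, hlim⟩ := eventually_ne_zero_and_tendstoUniformlyOn_pinnedKernel_div
    ((tendsto_rpow_nhdsGT_zero (by linarith [hα.1])).mono_right (nhdsGT_le_nhdsNE 0))
    (tendstoUniformlyOn_leadingFactor a b) (tendstoUniformlyOn_leadingFactor a b)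
    (tendstoUniformlyOn_rankOneRemainder_leadingFactor (k := fun ε t s => K ε t s / ε ^ 2)
      hα.2 ha hK) hg₀ hg₀ hφ₁ hφ₂ one_mem one_mem (by simpa using ha) (by simpa using ha)
  refine ⟨hne.mono fun _ h => (div_ne_zero_iff.1 h).1, (hlim.congr ?_).congr_right fun p _ => ?_⟩
  · filter_upwards [self_mem_nhdsWithin] with ε hε p _
    have hpow : ε ^ (3 + α) = ε ^ 2 * ε ^ (1 + α) := by
      rw [← Real.rpow_natCast, ← Real.rpow_add hε]
      congr 1
      push_cast
      ring
    rw [hpow]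
    exact (congrArg (· / ε ^ (1 + α)) (pinnedKernel_div (K ε) (ε ^ 2) 1 1 p.1 p.2)).trans
      (div_div _ _ _)
  · field_simp

/-- If `K_ε(t,s) = ε²[a²·ts + b(t²s+ts²)ε + φ(t,s)ε^{1+α} + R_ε(t,s)]` with
`sup_{[0,1]²}|R_ε|/ε^{1+α} → 0` and `α ∈ (0,1)`, then eventually `K_ε(1,1) ≠ 0` and the
bridge covariance `K_ε(t,s) − K_ε(t,1)K_ε(1,s)/K_ε(1,1)`, rescaled by `ε^{3+α}`, converges
uniformly on `[0,1]²` to `k̄_Y(t,s) = φ(t,s) + ts·φ(1,1) − t·φ(1,s) − s·φ(t,1)`. -/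
theorem bridge_covariance_refined_limit_secondOrder
    (α a b : ℝ) (hα : α ∈ Ioo (0:ℝ) 1) (ha : a ≠ 0)
    (φ : ℝ → ℝ → ℝ)
    (hφ : ContinuousOn (fun p : ℝ × ℝ => φ p.1 p.2) (Icc 0 1 ×ˢ Icc 0 1))
    (K : ℝ → ℝ → ℝ → ℝ)
    (hK : TendstoUniformlyOn
      (fun ε (p : ℝ × ℝ) =>
        (K ε p.1 p.2 / ε ^ 2 - a ^ 2 * (p.1 * p.2) -
          b * (p.1 ^ 2 * p.2 + p.1 * p.2 ^ 2) * ε -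
          φ p.1 p.2 * ε ^ (1 + α)) / ε ^ (1 + α))
      (fun _ => 0) (𝓝[>] (0:ℝ)) (Icc 0 1 ×ˢ Icc 0 1)) :
    (∀ᶠ ε in 𝓝[>] (0:ℝ), K ε 1 1 ≠ 0) ∧
    TendstoUniformlyOn
      (fun ε (p : ℝ × ℝ) =>
        (K ε p.1 p.2 - K ε p.1 1 * K ε 1 p.2 / K ε 1 1) / ε ^ (3 + α))
      (fun p => φ p.1 p.2 + p.1 * p.2 * φ 1 1 - p.1 * φ 1 p.2 - p.2 * φ p.1 1)
      (𝓝[>] (0:ℝ)) (Icc 0 1 ×ˢ Icc 0 1) := by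
  have one_mem : (1 : ℝ) ∈ Icc (0 : ℝ) 1 := by simp
  have hφ₁ : (φ · 1) =O[𝓟 (Icc 0 1)] fun _ => (1 : ℝ) :=
    (hφ.comp (f := fun t => (t, 1)) (by fun_prop) fun _ ht => ⟨ht, one_mem⟩).isBigO_principal
      isCompact_Icc (by simp)
  have hφ₂ : φ 1 =O[𝓟 (Icc 0 1)] fun _ => (1 : ℝ) :=
    (hφ.comp (f := fun s => (1, s)) (by fun_prop) fun _ hs => ⟨one_mem, hs⟩).isBigO_principal
      isCompact_Icc (by simp)
  exact bridge_covariance_refined_limit_secondOrder_general α a b ⟨by linarith [hα.1], hα.2⟩ ha φ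
    hφ₁ hφ₂ K hK
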